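/- Consider the finite-horizon Markov decision setup with deterministic transitions: let A be a finite nonempty type of actions, Z a type of states, F : Z → A → Z a transition map, z₀ ∈ Z an initial state, and N ∈ ℕ a horizon; let π : ℝ → Z → A → ℝ be a stochastic policy such that for every parameter θ ∈ ℝ and state z ∈ Z, π θ z u > 0 for all u ∈ A and ∑_{u ∈ A} π θ z u = 1, and for each (z, u) the map θ ↦ π θ z u is differentiable; for an action sequence u : {0,…,N} → A define states recursively by z_0(u) = z₀ and z_{i+1}(u) = F (z_i(u)) (u_i), and the trajectory probability P θ u = ∏_{i=0}^{N} π θ (z_i(u)) (u_i). Then for every θ₀ ∈ ℝ, every index i ∈ {0,…,N}, and every function h : ({0,…,i−1} → A) → ℝ depending only on the actions taken before step i, one has ∑_{u} P θ₀ u · h(u restricted to {0,…,i−1}) · (d/dθ)|_{θ=θ₀} log (π θ (z_i(u)) (u_i)) = 0 (sum over all action sequences u). In particular, for any state-dependent baseline b : Z → ℝ, ∑_{u} P θ₀ u · b(z_i(u)) · (d/dθ)|_{θ=θ₀} log (π θ (z_i(u)) (u_i)) = 0. -/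

import Mathlib

/-!
The score has mean zero under the policy at every state: `∑ₐ π θ z a · ∂ log π θ z a = ∂ ∑ₐ π θ z a
= ∂ 1 = 0` (`sum_mul_score_eq_zero`).

To use this inside the sum over action sequences, single actions are averaged out with
`sum_mul_eq_zero`: a sum over `u` of `E u * f u`, where `E` does not see the action `u k`, vanishes
if `f` has a constant average `c` over `u k` and either `c = 0` or `∑ E = 0`.
Truncate the trajectory probability to its first `m` factors. For `m = i + 1`, averaging over `u i`
gives zero because the history and the state at step `i` do not see `u i`. Each further factor
sums to `1` over its own action, which nothing earlier sees, so the truncated sum stays zero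
(`sum_truncated_eq_zero`), up to the full product at `m = N + 1`.
-/

/-- The state at step `i` of the deterministic trajectory determined by the
transition map `F`, the initial state `z₀`, and the action sequence `u`. -/
def traj {A Z : Type*} {N : ℕ} (F : Z → A → Z) (z₀ : Z) (u : Fin (N+1) → A) : ℕ → Z
  | 0 => z₀
  | (i+1) => F (traj F z₀ u i) (u ⟨i % (N+1), Nat.mod_lt i (Nat.succ_pos N)⟩)

theorem traj_congr {A Z : Type*} {N : ℕ} (F : Z → A → Z) (z₀ : Z) {u v : Fin (N+1) → A} (m : ℕ)
    (hm : m ≤ N + 1) (huv : ∀ j : Fin (N+1), (j : ℕ) < m → u j = v j) :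
    traj F z₀ u m = traj F z₀ v m := by
  induction m with
  | zero => rfl
  | succ m ih =>
    have hmod : m % (N + 1) = m := Nat.mod_eq_of_lt (by omega)
    simp only [traj]
    rw [ih (by omega) fun j hj => huv j (by omega), huv _ (by simp only [hmod]; omega)]

/-- Resampling one coordinate of a uniformly chosen function leaves its law unchanged. -/
theorem card_mul_sum_eq_sum_update {ι A : Type*} [Fintype ι] [DecidableEq ι] [Fintype A]
    (k : ι) (f : (ι → A) → ℝ) :
    (Fintype.card A : ℝ) * ∑ u, f u = ∑ u, ∑ a, f (Function.update u k a) := by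
  -- Exchanging the fresh value `a` with the old value `u k` is an involution on pairs `(u, a)`.
  have hinv : Function.Involutive
      (fun x : (ι → A) × A => (Function.update x.1 k x.2, x.1 k)) := by
    rintro ⟨u, a⟩
    simp
  rw [← Fintype.sum_prod_type' (f := fun u a => f (Function.update u k a)),
    Fintype.sum_equiv hinv.toPerm (fun x : (ι → A) × A => f (Function.update x.1 k x.2))
      (fun x => f x.1) (fun x => rfl),
    Fintype.sum_prod_type, Finset.mul_sum]
  simp

theorem sum_mul_eq_zero {ι A : Type*} [Fintype ι] [DecidableEq ι] [Fintype A] [Nonempty A]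
    (k : ι) (E f : (ι → A) → ℝ) (c : ℝ)
    (hE : ∀ u a, E (Function.update u k a) = E u)
    (hf : ∀ u, ∑ a, f (Function.update u k a) = c)
    (h0 : c = 0 ∨ ∑ u, E u = 0) : ∑ u, E u * f u = 0 := by
  have hcard : (Fintype.card A : ℝ) ≠ 0 := by exact_mod_cast Fintype.card_ne_zero
  refine (mul_eq_zero.mp ?_).resolve_left hcard
  rw [card_mul_sum_eq_sum_update k]
  simp only [hE, ← Finset.mul_sum, hf]
  rw [← Finset.sum_mul]
  rcases h0 with h | h <;> simp [h]

theorem sum_mul_score_eq_zero {A : Type*} [Fintype A] (p : ℝ → A → ℝ)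
    (hpos : ∀ θ a, 0 < p θ a) (hsum : ∀ θ, ∑ a, p θ a = 1)
    (hdiff : ∀ a, Differentiable ℝ (fun θ => p θ a)) (θ₀ : ℝ) :
    ∑ a, p θ₀ a * deriv (fun θ => Real.log (p θ a)) θ₀ = 0 := by
  have h1 : ∀ a, p θ₀ a * deriv (fun θ => Real.log (p θ a)) θ₀ = deriv (fun θ => p θ a) θ₀ := by
    intro a
    rw [deriv.log (hdiff a θ₀) (hpos θ₀ a).ne', mul_div_cancel₀ _ (hpos θ₀ a).ne']
  simp only [h1]
  rw [← deriv_fun_sum fun a _ => hdiff a θ₀]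
  simp [hsum]

theorem sum_truncated_eq_zero {A Z : Type*} [Fintype A] [Nonempty A]
    (F : Z → A → Z) (z₀ : Z) (N : ℕ) (p s : Z → A → ℝ)
    (hsum : ∀ z, ∑ a, p z a = 1) (hscore : ∀ z, ∑ a, p z a * s z a = 0)
    (i : Fin (N+1)) (g : (Fin (N+1) → A) → ℝ)
    (hg : ∀ u v, (∀ j, j < i → u j = v j) → g u = g v)
    (m : ℕ) (him : (i : ℕ) + 1 ≤ m) (hm : m ≤ N + 1) :
    ∑ u : Fin (N+1) → A,
      (∏ j ∈ Finset.univ.filter (fun j : Fin (N+1) => (j : ℕ) < m), p (traj F z₀ u j) (u j)) * g u *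
        s (traj F z₀ u i) (u i) = 0 := by
  have hup : ∀ (u : Fin (N+1) → A) (k j : Fin (N+1)) (a : A), j < k →
      Function.update u k a j = u j :=
    fun u k j a hj => Function.update_of_ne hj.ne _ _
  have htraj : ∀ (u : Fin (N+1) → A) (k j : Fin (N+1)) (a : A), j ≤ k →
      traj F z₀ (Function.update u k a) j = traj F z₀ u j :=
    fun u k j a hj => traj_congr F z₀ j (by omega) fun l hl =>
      hup u k l a (lt_of_lt_of_le (Fin.lt_def.mpr hl) hj)
  have hprod : ∀ (u : Fin (N+1) → A) (k : Fin (N+1)) (a : A),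
      (∏ j ∈ Finset.univ.filter (fun j : Fin (N+1) => (j : ℕ) < k),
        p (traj F z₀ (Function.update u k a) j) (Function.update u k a j)) =
      ∏ j ∈ Finset.univ.filter (fun j : Fin (N+1) => (j : ℕ) < k), p (traj F z₀ u j) (u j) := by
    intro u k a
    refine Finset.prod_congr rfl fun j hj => ?_
    have hjk : j < k := Fin.lt_def.mpr (Finset.mem_filter.mp hj).2
    rw [htraj u k j a hjk.le, hup u k j a hjk]
  have hgup : ∀ (u : Fin (N+1) → A) (k : Fin (N+1)) (a : A), i ≤ k →
      g (Function.update u k a) = g u :=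
    fun u k a hk => hg _ _ fun j hj => hup u k j a (lt_of_lt_of_le hj hk)
  have hsplit : ∀ (u : Fin (N+1) → A) (k : Fin (N+1)),
      (∏ j ∈ Finset.univ.filter (fun j : Fin (N+1) => (j : ℕ) < (k : ℕ) + 1), p (traj F z₀ u j) (u j)) =
      p (traj F z₀ u k) (u k) * ∏ j ∈ Finset.univ.filter (fun j : Fin (N+1) => (j : ℕ) < k), p (traj F z₀ u j) (u j) := by
    intro u k
    have hins := Finset.prod_insert (f := fun j : Fin (N+1) => p (traj F z₀ u j) (u j))
      (s := Finset.univ.filter (fun j : Fin (N+1) => (j : ℕ) < k)) (a := k) (by simp)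
    rw [← hins]
    congr 1
    ext j
    simp only [Finset.mem_filter, Finset.mem_univ, true_and, Finset.mem_insert, Fin.ext_iff]
    omega
  induction m, him using Nat.le_induction with
  | base =>
    have key := sum_mul_eq_zero i
      (fun u => (∏ j ∈ Finset.univ.filter (fun j : Fin (N+1) => (j : ℕ) < i), p (traj F z₀ u j) (u j)) * g u)
      (fun u => p (traj F z₀ u i) (u i) * s (traj F z₀ u i) (u i)) 0
      (fun u a => by simp only [hprod, hgup u i a le_rfl])
      (fun u => by simp only [htraj u i i _ le_rfl, Function.update_self, hscore])
      (Or.inl rfl)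
    rw [← key]
    refine Finset.sum_congr rfl fun u _ => ?_
    rw [hsplit]
    ring
  | succ m him ih =>
    obtain ⟨k, rfl⟩ : ∃ k : Fin (N+1), (k : ℕ) = m := ⟨⟨m, by omega⟩, rfl⟩
    have hik : i < k := Fin.lt_def.mpr him
    have key := sum_mul_eq_zero k
      (fun u => (∏ j ∈ Finset.univ.filter (fun j : Fin (N+1) => (j : ℕ) < k), p (traj F z₀ u j) (u j)) * g u *
        s (traj F z₀ u i) (u i))
      (fun u => p (traj F z₀ u k) (u k)) 1
      (fun u a => by
        simp only [hprod, hgup u k a hik.le, htraj u k i a hik.le, hup u k i a hik])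
      (fun u => by simp only [htraj u k k _ le_rfl, Function.update_self, hsum])
      (Or.inr (ih (by omega)))
    rw [← key]
    refine Finset.sum_congr rfl fun u _ => ?_
    rw [hsplit]
    ring

/-- Causality lemma: the score of the policy at step `i` is uncorrelated with
any quantity determined by the actions taken before step `i`; in particular a
state-dependent baseline introduces no bias. -/
theorem score_uncorrelated_with_history {A Z : Type*} [Fintype A] [Nonempty A]
    (F : Z → A → Z) (z₀ : Z) (N : ℕ)
    (π : ℝ → Z → A → ℝ)
    (hpos : ∀ θ z u, 0 < π θ z u)
    (hsum : ∀ θ z, ∑ u, π θ z u = 1)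
    (hdiff : ∀ z u, Differentiable ℝ (fun θ => π θ z u))
    (θ₀ : ℝ) (i : Fin (N+1)) :
    (∀ h : (Fin (i : ℕ) → A) → ℝ,
      ∑ u : Fin (N+1) → A,
        (∏ j : Fin (N+1), π θ₀ (traj F z₀ u j) (u j)) *
        h (fun k : Fin (i : ℕ) => u ⟨(k : ℕ), lt_trans k.isLt i.isLt⟩) *
        deriv (fun θ => Real.log (π θ (traj F z₀ u i) (u i))) θ₀ = 0) ∧
    (∀ b : Z → ℝ,
      ∑ u : Fin (N+1) → A,
        (∏ j : Fin (N+1), π θ₀ (traj F z₀ u j) (u j)) *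
        b (traj F z₀ u i) *
        deriv (fun θ => Real.log (π θ (traj F z₀ u i) (u i))) θ₀ = 0) := by
  have key : ∀ g : (Fin (N+1) → A) → ℝ, (∀ u v, (∀ j, j < i → u j = v j) → g u = g v) →
      ∑ u : Fin (N+1) → A, (∏ j : Fin (N+1), π θ₀ (traj F z₀ u j) (u j)) * g u *
        deriv (fun θ => Real.log (π θ (traj F z₀ u i) (u i))) θ₀ = 0 := by
    intro g hg
    have h := sum_truncated_eq_zero F z₀ N (π θ₀)
      (fun z a => deriv (fun θ => Real.log (π θ z a)) θ₀) (hsum θ₀)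
      (fun z => sum_mul_score_eq_zero (fun θ => π θ z) (fun θ => hpos θ z) (fun θ => hsum θ z)
        (hdiff z) θ₀) i g hg (N + 1) (by omega) le_rfl
    simpa only [Fin.is_lt, Finset.filter_true] using h
  refine ⟨fun h => key _ fun u v huv => ?_, fun b => key _ fun u v huv => ?_⟩
  · exact congrArg h (funext fun k => huv _ (Fin.lt_def.mpr k.isLt))
  · exact congrArg b (traj_congr F z₀ i (by omega) fun j hj => huv j (Fin.lt_def.mpr hj))
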